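/- Let K be a number field, let α_1,…,α_k ∈ Z_K be pairwise distinct nonzero algebraic integers, and let a_1,…,a_k ∈ K, not all zero, so that x_n = a_1 α_1^n + … + a_k α_k^n for n ≥ 0 is a linear recurrence sequence in K. Then for any a, b ∈ Z_K with b ≠ 0, there exists a non-Archimedean place v' of K such that the v'-adically convergent sum Σ_{n≥0} n! x_n ≠ a/b in K_{v'}. -/

import Mathlib

open NumberField IsDedekindDomain Nat Finset

/-!
Suppose `∑ n! xₙ = γ` in every `K_v`, with `x` integral after clearing denominators. The tail of
the series from the index `N` on is divisible by `N!` at every finite place, so the rescaled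
remainders `y_N = (γ - ∑_{n < N} n! xₙ) / N!` lie in `𝓞 K`. They satisfy `y = x + D y`, where
`(D y)ₙ = (n + 1) yₙ₊₁`.

Let `S` be the shift and `g = ∏ (X - αᵢ)`, so that `g(S) x = 0`. The commutation relation
`S D = D S + S²` gives `g(S)ᵐ y = g(S)ᵐ Dᵐ y`, so the entries of `g(S)ᵐ y` are divisible by `m!`.
Their houses grow only geometrically in `m`, hence any fixed entry vanishes for large `m`, and the
recurrence with characteristic polynomial `g` propagates this to all entries at once: `g(S)ᵐ y = 0`
for some `m`. If `g(S)ᵐ⁺¹ y = 0`, then applying `g(S)ᵐ⁺¹` to `y = x + D y` shows, in characteristic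
zero, that `X² g'` evaluated at `S` annihilates `g(S)ᵐ y`, as does `g(S)`. Since `g` has no root in
common with `X² g'`, already `g(S)ᵐ y = 0`, and by descent `y = 0`. Hence `x = 0`, which is
impossible because the `αᵢ` are distinct.
-/

section ShiftDerivative

open Polynomial Lagrange

variable {R M : Type*} [CommRing R] [AddCommGroup M] [Module R M] {S D : Module.End R M}

theorem aeval_mul_eq_mul_aeval_add {A : Type*} [Ring A] [Algebra R A] {S D : A}
    (hSD : S * D = D * S + S ^ 2) (p : R[X]) :
    aeval S p * D = D * aeval S p + aeval S (X ^ 2 * derivative p) := by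
  induction p using Polynomial.induction_on with
  | C r => simp [Algebra.commutes]
  | add p q hp hq =>
    simp only [map_add, add_mul, mul_add, hp, hq]
    abel
  | monomial n r ih =>
    rw [_root_.pow_succ, ← mul_assoc]
    set q : R[X] := C r * X ^ n
    have hderiv : X ^ 2 * derivative (q * X) = X ^ 2 * derivative q * X + q * X ^ 2 := by
      rw [derivative_mul, derivative_X]
      ring
    calc aeval S (q * X) * D
        = aeval S q * (S * D) := by rw [map_mul, aeval_X, mul_assoc]
      _ = aeval S q * D * S + aeval S q * S ^ 2 := by rw [hSD, mul_add, mul_assoc]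
      _ = D * (aeval S q * S) + (aeval S (X ^ 2 * derivative q) * S + aeval S q * S ^ 2) := by
        rw [ih, add_mul, mul_assoc, add_assoc]
      _ = D * aeval S (q * X) + aeval S (X ^ 2 * derivative (q * X)) := by
        simp only [hderiv, map_add, map_mul, map_pow, aeval_X]

theorem aeval_apply_apply_eq_add (hSD : S * D = D * S + S ^ 2) (p : R[X]) (u : M) :
    aeval S p (D u) = D (aeval S p u) + aeval S (X ^ 2 * derivative p) u :=
  LinearMap.congr_fun (aeval_mul_eq_mul_aeval_add hSD p) u

theorem aeval_apply_eq_zero_of_dvd {p q : R[X]} (hpq : p ∣ q) {u : M} (hu : aeval S p u = 0) :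
    aeval S q u = 0 := by
  obtain ⟨r, rfl⟩ := hpq
  rw [mul_comm, map_mul, Module.End.mul_apply, hu, map_zero]

theorem aeval_pow_succ_apply_apply_eq_zero (hSD : S * D = D * S + S ^ 2) {g : R[X]} {j : ℕ}
    {u : M} (hu : aeval S (g ^ j) u = 0) : aeval S (g ^ (j + 1)) (D u) = 0 := by
  have hdvd : g ^ j ∣ X ^ 2 * derivative (g ^ (j + 1)) := by
    rw [derivative_pow_succ]
    exact ((dvd_mul_left _ _).mul_right _).mul_left _
  rw [aeval_apply_apply_eq_add hSD, aeval_apply_eq_zero_of_dvd (pow_dvd_pow g j.le_succ) hu,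
    aeval_apply_eq_zero_of_dvd hdvd hu, map_zero, add_zero]

theorem aeval_pow_succ_apply_pow_apply_eq_zero (hSD : S * D = D * S + S ^ 2) {g : R[X]} {x : M}
    (hx : aeval S g x = 0) (j : ℕ) : aeval S (g ^ (j + 1)) ((D ^ j) x) = 0 := by
  induction j with
  | zero => simpa using hx
  | succ j ih =>
    rw [_root_.pow_succ' D, Module.End.mul_apply]
    exact aeval_pow_succ_apply_apply_eq_zero hSD ih

theorem aeval_pow_apply_eq_aeval_pow_apply_pow_apply (hSD : S * D = D * S + S ^ 2) {g : R[X]}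
    {x y : M} (hx : aeval S g x = 0) (hy : y = x + D y) (m : ℕ) :
    aeval S (g ^ m) y = aeval S (g ^ m) ((D ^ m) y) := by
  induction m with
  | zero => simp
  | succ m ih =>
    have hDy : (D ^ m) y = (D ^ m) x + (D ^ (m + 1)) y := by
      conv_lhs => rw [hy]
      rw [map_add, _root_.pow_succ, Module.End.mul_apply]
    calc aeval S (g ^ (m + 1)) y
        = aeval S g (aeval S (g ^ m) y) := by
          rw [_root_.pow_succ', map_mul, Module.End.mul_apply]
      _ = aeval S (g ^ (m + 1)) ((D ^ m) y) := by
          rw [ih, _root_.pow_succ', map_mul, Module.End.mul_apply]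
      _ = aeval S (g ^ (m + 1)) ((D ^ (m + 1)) y) := by
          rw [hDy, map_add, aeval_pow_succ_apply_pow_apply_eq_zero hSD hx, zero_add]

variable {ι : Type*} {s : Finset ι} {α : ι → R}

theorem eq_zero_of_aeval_nodal_apply_eq_zero [IsDomain R] [Module.IsTorsionFree R M] {q : R[X]}
    (hq : ∀ i ∈ s, q.eval (α i) ≠ 0) {z : M} (hs : aeval S (nodal s α) z = 0)
    (hz : aeval S q z = 0) : z = 0 := by
  classical
  induction s using Finset.induction_on with
  | empty => simpa using hs
  | insert i s hi ih =>
    refine ih (fun j hj ↦ hq j (mem_insert_of_mem hj)) ?_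
    rw [nodal_insert_eq_nodal hi, map_mul, Module.End.mul_apply] at hs
    set w := aeval S (nodal s α) z
    have hw : S w = α i • w := by simpa [sub_eq_zero] using hs
    have hqw : q.eval (α i) • w = 0 := by
      rw [← Module.End.aeval_apply_of_mem_apply_eq_smul hw, ← Module.End.mul_apply, ← map_mul,
        mul_comm, map_mul, Module.End.mul_apply, hz, map_zero]
    exact (smul_eq_zero.1 hqw).resolve_left (hq i (mem_insert_self i s))

theorem eval_derivative_nodal_ne_zero [IsDomain R] (hα : Set.InjOn α s) {i : ι} (hi : i ∈ s) :
    (derivative (nodal s α)).eval (α i) ≠ 0 := by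
  classical
  rw [eval_nodal_derivative_eval_node_eq hi]
  exact eval_nodal_not_at_node fun j hj ↦
    (hα.ne (mem_of_mem_erase hj) hi (ne_of_mem_erase hj)).symm

theorem eq_zero_of_aeval_nodal_pow_apply_eq_zero [IsDomain R] [CharZero R]
    [Module.IsTorsionFree R M] (hSD : S * D = D * S + S ^ 2) (hα : Set.InjOn α s)
    (hα0 : ∀ i ∈ s, α i ≠ 0) {x y : M} (hx : aeval S (nodal s α) x = 0) (hy : y = x + D y)
    {m : ℕ} (hm : aeval S (nodal s α ^ m) y = 0) : y = 0 := by
  induction m with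
  | zero => simpa using hm
  | succ m ih =>
    set g := nodal s α
    let q : R[X] := X ^ 2 * (C (m + 1 : R) * derivative g)
    have hqg : q * g ^ m = X ^ 2 * derivative (g ^ (m + 1)) := by
      rw [derivative_pow_succ]
      ring
    have hDy : aeval S (g ^ (m + 1)) (D y) = 0 := by
      rw [eq_sub_of_add_eq' hy.symm, map_sub, hm,
        aeval_apply_eq_zero_of_dvd (dvd_pow_self g m.succ_ne_zero) hx, sub_zero]
    have hqz : aeval S q (aeval S (g ^ m) y) = 0 := by
      rw [aeval_apply_apply_eq_add hSD, hm, map_zero, zero_add, ← hqg, map_mul] at hDy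
      exact hDy
    refine ih (eq_zero_of_aeval_nodal_apply_eq_zero (s := s) (α := α) (q := q)
      (fun i hi ↦ ?_) ?_ hqz)
    · have hm0 : (m + 1 : R) ≠ 0 := Nat.cast_add_one_ne_zero m
      simpa [q, hm0, hα0 i hi] using eval_derivative_nodal_ne_zero hα hi
    · rw [← Module.End.mul_apply, ← map_mul, ← _root_.pow_succ']
      exact hm

end ShiftDerivative

section Sequences

open Polynomial Lagrange

variable {R : Type*} [CommRing R]

/-- The left shift `u ↦ (n ↦ u (n + 1))` as an endomorphism of the module of sequences; linear
recurrences are expressed through its polynomials. -/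
def seqShift (R : Type*) [CommRing R] : Module.End R (ℕ → R) :=
  LinearMap.pi fun n ↦ LinearMap.proj (n + 1)

/-- The derivative of the formal power series `∑ uₙ tⁿ`, acting on its sequence of coefficients. -/
def seqDeriv (R : Type*) [CommRing R] : Module.End R (ℕ → R) :=
  LinearMap.pi fun n ↦ (n + 1 : R) • LinearMap.proj (n + 1)

theorem seqShift_apply (u : ℕ → R) (n : ℕ) : seqShift R u n = u (n + 1) := rfl

theorem seqDeriv_apply (u : ℕ → R) (n : ℕ) : seqDeriv R u n = (n + 1) * u (n + 1) := rfl

theorem seqShift_mul_seqDeriv :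
    seqShift R * seqDeriv R = seqDeriv R * seqShift R + seqShift R ^ 2 := by
  ext u n
  simp only [Module.End.mul_apply, LinearMap.add_apply, Pi.add_apply, sq, seqShift_apply,
    seqDeriv_apply]
  push_cast
  ring

theorem seqShift_pow_apply (u : ℕ → R) (i n : ℕ) : (seqShift R ^ i) u n = u (n + i) := by
  induction i generalizing n with
  | zero => simp
  | succ i ih =>
    rw [_root_.pow_succ', Module.End.mul_apply, seqShift_apply, ih, add_right_comm, add_assoc]

theorem aeval_seqShift_apply (p : R[X]) (u : ℕ → R) (n : ℕ) :
    aeval (seqShift R) p u n = ∑ i ∈ range (p.natDegree + 1), p.coeff i * u (n + i) := by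
  simp [aeval_eq_sum_range, LinearMap.sum_apply, Finset.sum_apply, seqShift_pow_apply]

theorem seqDeriv_pow_apply (u : ℕ → R) (m n : ℕ) :
    (seqDeriv R ^ m) u n = (n + 1).ascFactorial m * u (n + m) := by
  induction m generalizing n with
  | zero => simp
  | succ m ih =>
    have hasc : (n + 1) * (n + 1 + 1).ascFactorial m = (n + 1).ascFactorial (m + 1) := by
      rw [Nat.succ_ascFactorial, Nat.ascFactorial_succ]
    rw [_root_.pow_succ', Module.End.mul_apply, seqDeriv_apply, ih, ← hasc, ← mul_assoc,
      add_right_comm n 1 m, add_assoc n m 1]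
    push_cast
    rfl

theorem aeval_nodal_seqShift_sum_mul_pow_eq_zero {ι : Type*} (s : Finset ι) (α b : ι → R) :
    aeval (seqShift R) (nodal s α) (fun n ↦ ∑ i ∈ s, b i * α i ^ n) = 0 := by
  have hsum : (fun n ↦ ∑ i ∈ s, b i * α i ^ n) = ∑ i ∈ s, b i • fun n ↦ α i ^ n := by
    ext n
    simp [Finset.sum_apply]
  rw [hsum, map_sum]
  refine Finset.sum_eq_zero fun i hi ↦ ?_
  have hshift : seqShift R (fun n ↦ α i ^ n) = α i • fun n ↦ α i ^ n :=
    funext fun n ↦ _root_.pow_succ' (α i) n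
  rw [map_smul, Module.End.aeval_apply_of_mem_apply_eq_smul hshift, eval_nodal_at_node hi,
    zero_smul, smul_zero]

theorem factorial_dvd_aeval_seqShift_pow {g : R[X]} {x y : ℕ → R}
    (hx : aeval (seqShift R) g x = 0) (hy : y = x + seqDeriv R y) (m n : ℕ) :
    (m ! : R) ∣ aeval (seqShift R) (g ^ m) y n := by
  rw [aeval_pow_apply_eq_aeval_pow_apply_pow_apply seqShift_mul_seqDeriv hx hy,
    aeval_seqShift_apply]
  refine Finset.dvd_sum fun i _ ↦ Dvd.dvd.mul_left ?_ _
  rw [seqDeriv_pow_apply]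
  exact (Nat.cast_dvd_cast (Nat.factorial_dvd_ascFactorial _ _)).mul_right _

theorem eq_zero_of_aeval_seqShift_eq_succ {g : R[X]} (hg : g.Monic) (hdeg : g.natDegree ≠ 0)
    {w : ℕ → ℕ → R} (hw : ∀ m, aeval (seqShift R) g (w m) = w (m + 1))
    (hinit : ∀ m, ∀ n < g.natDegree, w m n = 0) (m : ℕ) : w m = 0 := by
  suffices h : ∀ n m, w m n = 0 from funext fun n ↦ h n m
  intro n
  induction n using Nat.strong_induction_on with
  | h n ih =>
    intro m
    obtain hn | hn := lt_or_ge n g.natDegree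
    · exact hinit m n hn
    obtain ⟨l, rfl⟩ := Nat.exists_eq_add_of_le' hn
    have hlow : ∑ i ∈ range g.natDegree, g.coeff i * w m (l + i) = 0 :=
      Finset.sum_eq_zero fun i hi ↦ by
        rw [ih (l + i) (Nat.add_lt_add_left (mem_range.1 hi) l), mul_zero]
    calc w m (l + g.natDegree)
        = aeval (seqShift R) g (w m) l := by
          rw [aeval_seqShift_apply, sum_range_succ, hlow, hg.coeff_natDegree, zero_add, one_mul]
      _ = 0 := by rw [hw, ih l (Nat.lt_add_of_pos_right (Nat.pos_of_ne_zero hdeg))]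

end Sequences

section House

open Polynomial Lagrange

variable {K : Type*} [Field K] [NumberField K]

theorem house_sub_le_add (x y : K) : house (x - y) ≤ house x + house y := by
  simpa only [house, map_sub] using norm_sub_le _ _

theorem house_sum_mul_pow_le {ι : Type*} (s : Finset ι) (b α : ι → K) {c : ℝ}
    (hα : ∀ i ∈ s, house (α i) ≤ c) (n : ℕ) :
    house (∑ i ∈ s, b i * α i ^ n) ≤ (∑ i ∈ s, house (b i)) * c ^ n := by
  rw [sum_mul]
  refine (house_sum_le_sum_house _ _).trans (sum_le_sum fun i hi ↦ (house_mul_le _ _).trans ?_)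
  exact mul_le_mul_of_nonneg_left
    ((house_pow_le _ _).trans (pow_le_pow_left₀ (house_nonneg _) (hα i hi) n)) (house_nonneg _)

theorem house_le_of_eq_add_seqDeriv {x y : ℕ → 𝓞 K} (hy : y = x + seqDeriv (𝓞 K) y) {C c : ℝ}
    (hc : 2 ≤ c) (hx : ∀ n, house (x n : K) ≤ C * c ^ n) (n : ℕ) :
    house (y n : K) ≤ (C + house (y 0 : K)) * c ^ n := by
  have hC : 0 ≤ C := (house_nonneg _).trans (by simpa using hx 0)
  have hy0 : 0 ≤ house (y 0 : K) := house_nonneg _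
  induction n with
  | zero => simpa using hC
  | succ n ih =>
    have hrec : ((n + 1 : ℕ) : K) * y (n + 1) = y n - x n := by
      rw [congrFun hy n, Pi.add_apply, seqDeriv_apply]
      push_cast
      ring
    calc house (y (n + 1) : K)
        ≤ (n + 1 : ℕ) * house (y (n + 1) : K) :=
          le_mul_of_one_le_left (house_nonneg _) (mod_cast n.succ_pos)
      _ = house (y n - x n : K) := by rw [← house_nat_mul, hrec]
      _ ≤ (C + house (y 0 : K)) * c ^ n + C * c ^ n :=
          (house_sub_le_add _ _).trans (add_le_add ih (hx n))
      _ ≤ (C + house (y 0 : K)) * c ^ n + (C + house (y 0 : K)) * c ^ n := by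
          gcongr
          exact le_add_of_nonneg_right hy0
      _ = (C + house (y 0 : K)) * c ^ n * 2 := (mul_two _).symm
      _ ≤ (C + house (y 0 : K)) * c ^ n * c := by gcongr
      _ = (C + house (y 0 : K)) * c ^ (n + 1) := by ring

theorem house_aeval_seqShift_le (p : (𝓞 K)[X]) {u : ℕ → 𝓞 K} {C c : ℝ}
    (hu : ∀ n, house (u n : K) ≤ C * c ^ n) (n : ℕ) :
    house (aeval (seqShift (𝓞 K)) p u n : K) ≤
      (∑ i ∈ range (p.natDegree + 1), house (p.coeff i : K) * c ^ i) * C * c ^ n := by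
  simp only [aeval_seqShift_apply, map_sum, sum_mul]
  refine (house_sum_le_sum_house _ _).trans (sum_le_sum fun i _ ↦ ?_)
  calc house ((p.coeff i * u (n + i) : 𝓞 K) : K)
      ≤ house (p.coeff i : K) * house (u (n + i) : K) := by
        simpa only [map_mul] using house_mul_le (p.coeff i : K) (u (n + i) : K)
    _ ≤ house (p.coeff i : K) * (C * c ^ (n + i)) :=
        mul_le_mul_of_nonneg_left (hu _) (house_nonneg _)
    _ = house (p.coeff i : K) * c ^ i * C * c ^ n := by ring

theorem house_aeval_seqShift_pow_le (p : (𝓞 K)[X]) {u : ℕ → 𝓞 K} {C c : ℝ}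
    (hu : ∀ n, house (u n : K) ≤ C * c ^ n) (m n : ℕ) :
    house (aeval (seqShift (𝓞 K)) (p ^ m) u n : K) ≤
      (∑ i ∈ range (p.natDegree + 1), house (p.coeff i : K) * c ^ i) ^ m * C * c ^ n := by
  induction m generalizing n with
  | zero => simpa using hu n
  | succ m ih =>
    rw [_root_.pow_succ', map_mul, Module.End.mul_apply, _root_.pow_succ', mul_assoc _ _ C]
    exact house_aeval_seqShift_le p ih n

theorem eventually_pow_mul_lt_factorial (q D : ℝ) : ∀ᶠ m : ℕ in Filter.atTop, q ^ m * D < m ! := by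
  have hlim := (FloorSemiring.tendsto_pow_div_factorial_atTop q).mul_const D
  rw [zero_mul] at hlim
  filter_upwards [hlim.eventually_lt_const zero_lt_one] with m hm
  rwa [div_mul_eq_mul_div, div_lt_one (mod_cast m.factorial_pos)] at hm

theorem eq_zero_of_natCast_dvd_of_house_lt {N : ℕ} {w : 𝓞 K} (hdvd : (N : 𝓞 K) ∣ w)
    (hlt : house (w : K) < N) : w = 0 := by
  obtain ⟨z, rfl⟩ := hdvd
  by_contra hne
  have hz : (z : K) ≠ 0 := RingOfIntegers.coe_ne_zero_iff.2 (right_ne_zero_of_mul hne)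
  simp only [map_mul, map_natCast, house_nat_mul] at hlt
  exact hlt.not_ge (le_mul_of_one_le_right N.cast_nonneg (one_le_house_of_isIntegral z.2 hz))

theorem exists_aeval_seqShift_pow_eq_zero {g : (𝓞 K)[X]} (hg : g.Monic) (hdeg : g.natDegree ≠ 0)
    {y : ℕ → 𝓞 K} (hdvd : ∀ m n, (m ! : 𝓞 K) ∣ aeval (seqShift (𝓞 K)) (g ^ m) y n) {C c : ℝ}
    (hc : 1 ≤ c) (hy : ∀ n, house (y n : K) ≤ C * c ^ n) :
    ∃ m, aeval (seqShift (𝓞 K)) (g ^ m) y = 0 := by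
  set q := ∑ i ∈ range (g.natDegree + 1), house (g.coeff i : K) * c ^ i
  have hc0 : 0 ≤ c := zero_le_one.trans hc
  have hq0 : 0 ≤ q := sum_nonneg fun i _ ↦ mul_nonneg (house_nonneg _) (pow_nonneg hc0 i)
  have hC : 0 ≤ C := (house_nonneg _).trans (by simpa using hy 0)
  obtain ⟨m₀, hm₀⟩ :=
    Filter.eventually_atTop.1 (eventually_pow_mul_lt_factorial q (C * c ^ g.natDegree))
  refine ⟨m₀, eq_zero_of_aeval_seqShift_eq_succ hg hdeg
    (w := fun m ↦ aeval (seqShift (𝓞 K)) (g ^ (m₀ + m)) y) (fun m ↦ ?_) (fun m n hn ↦ ?_) 0⟩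
  · rw [← Module.End.mul_apply, ← map_mul, ← _root_.pow_succ', add_assoc]
  · refine eq_zero_of_natCast_dvd_of_house_lt (K := K) (hdvd (m₀ + m) n) ?_
    calc house (aeval (seqShift (𝓞 K)) (g ^ (m₀ + m)) y n : K)
        ≤ q ^ (m₀ + m) * C * c ^ n := house_aeval_seqShift_pow_le g hy _ _
      _ ≤ q ^ (m₀ + m) * (C * c ^ g.natDegree) := by
          rw [mul_assoc]
          gcongr
      _ < (m₀ + m)! := hm₀ _ (Nat.le_add_right _ _)

theorem eq_zero_of_eq_sum_mul_pow_add_seqDeriv {ι : Type*} {s : Finset ι} (hs : s.Nonempty)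
    {α b : ι → 𝓞 K} (hα : Set.InjOn α s) (hα0 : ∀ i ∈ s, α i ≠ 0)
    {y : ℕ → 𝓞 K} (hy : y = (fun n ↦ ∑ i ∈ s, b i * α i ^ n) + seqDeriv (𝓞 K) y) : y = 0 := by
  set x : ℕ → 𝓞 K := fun n ↦ ∑ i ∈ s, b i * α i ^ n
  have hx := aeval_nodal_seqShift_sum_mul_pow_eq_zero s α b
  set c : ℝ := 2 + ∑ i ∈ s, house (α i : K)
  have hc2 : 2 ≤ c := le_add_of_nonneg_right (sum_nonneg fun i _ ↦ house_nonneg _)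
  have hαc (i) (hi : i ∈ s) : house (α i : K) ≤ c :=
    (single_le_sum (f := fun i ↦ house (α i : K)) (fun i _ ↦ house_nonneg _) hi).trans
      (le_add_of_nonneg_left zero_le_two)
  have hxc (n) : house (x n : K) ≤ (∑ i ∈ s, house (b i : K)) * c ^ n := by
    simpa only [x, map_sum, map_mul, map_pow] using
      house_sum_mul_pow_le s (fun i ↦ (b i : K)) (fun i ↦ (α i : K)) hαc n
  obtain ⟨m, hm⟩ : ∃ m, aeval (seqShift (𝓞 K)) (nodal s α ^ m) y = 0 :=
    exists_aeval_seqShift_pow_eq_zero nodal_monic (by simpa [natDegree_nodal] using hs.ne_empty)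
      (factorial_dvd_aeval_seqShift_pow hx hy) (one_le_two.trans hc2)
      (house_le_of_eq_add_seqDeriv hy hc2 hxc)
  exact eq_zero_of_aeval_nodal_pow_apply_eq_zero seqShift_mul_seqDeriv hα hα0 hx hy hm

end House

section Ultrametric

open Filter Topology

theorem pow_div_dvd_factorial (q n : ℕ) : q ^ (n / q) ∣ n ! := by
  rcases q.eq_zero_or_pos with rfl | hq
  · simp
  calc q ^ (n / q) ∣ (q !) ^ (n / q) := pow_dvd_pow_of_dvd (Nat.dvd_factorial hq le_rfl) _
    _ ∣ (n / q * q)! := by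
      simpa using Nat.prod_factorial_dvd_factorial_sum (range (n / q)) fun _ ↦ q
    _ ∣ n ! := Nat.factorial_dvd_factorial (Nat.div_mul_le_self n q)

variable {L : Type*} [NormedField L] [IsUltrametricDist L] {q : ℕ}

theorem norm_natCast_le_of_dvd {a b : ℕ} (hab : a ∣ b) : ‖(b : L)‖ ≤ ‖(a : L)‖ := by
  obtain ⟨c, rfl⟩ := hab
  rw [Nat.cast_mul, norm_mul]
  exact mul_le_of_le_one_right (norm_nonneg _) (IsUltrametricDist.norm_natCast_le_one L c)

theorem tendsto_factorial_nhds_zero (hq : q ≠ 0) (hqL : ‖(q : L)‖ < 1) :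
    Tendsto (fun n : ℕ ↦ (n ! : L)) atTop (𝓝 0) := by
  have hpow : Tendsto (fun n : ℕ ↦ ‖(q : L)‖ ^ (n / q)) atTop (𝓝 0) :=
    (tendsto_pow_atTop_nhds_zero_of_lt_one (norm_nonneg _) hqL).comp
      (Nat.tendsto_div_const_atTop hq)
  refine squeeze_zero_norm (fun n ↦ ?_) hpow
  simpa using norm_natCast_le_of_dvd (L := L) (pow_div_dvd_factorial q n)

variable [CompleteSpace L] {x : ℕ → L}

theorem summable_factorial_mul (hq : q ≠ 0) (hqL : ‖(q : L)‖ < 1) (hx : ∀ n, ‖x n‖ ≤ 1) :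
    Summable fun n : ℕ ↦ (n ! : L) * x n := by
  apply NonarchimedeanAddGroup.summable_of_tendsto_cofinite_zero
  rw [Nat.cofinite_eq_atTop]
  refine squeeze_zero_norm (fun n ↦ ?_)
    (tendsto_zero_iff_norm_tendsto_zero.1 (tendsto_factorial_nhds_zero hq hqL))
  rw [norm_mul]
  exact mul_le_of_le_one_right (norm_nonneg _) (hx n)

theorem norm_tsum_factorial_mul_sub_sum_le (hq : q ≠ 0) (hqL : ‖(q : L)‖ < 1)
    (hx : ∀ n, ‖x n‖ ≤ 1) (N : ℕ) :
    ‖∑' n : ℕ, (n ! : L) * x n - ∑ n ∈ range N, (n ! : L) * x n‖ ≤ ‖(N ! : L)‖ := by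
  rw [← (summable_factorial_mul hq hqL hx).sum_add_tsum_nat_add N, add_sub_cancel_left]
  refine IsUltrametricDist.norm_tsum_le_of_forall_le fun n ↦ ?_
  rw [norm_mul]
  calc ‖((n + N)! : L)‖ * ‖x (n + N)‖ ≤ ‖((n + N)! : L)‖ :=
        mul_le_of_le_one_right (norm_nonneg _) (hx _)
    _ ≤ ‖(N ! : L)‖ := norm_natCast_le_of_dvd (Nat.factorial_dvd_factorial (Nat.le_add_left N n))

end Ultrametric

section Places

variable {K : Type*} [Field K] [NumberField K]

theorem norm_algebraMap_adicCompletion_le_one_iff (v : HeightOneSpectrum (𝓞 K)) (x : K) :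
    ‖algebraMap K (v.adicCompletion K) x‖ ≤ 1 ↔ v.valuation K x ≤ 1 := by
  rw [Valued.toNormedField.norm_le_one_iff, ← v.valuedAdicCompletion_eq_valuation']
  rfl

theorem norm_absNorm_adicCompletion_lt_one (v : HeightOneSpectrum (𝓞 K)) :
    ‖(Ideal.absNorm v.asIdeal : v.adicCompletion K)‖ < 1 := by
  have hmem := Ideal.absNorm_mem v.asIdeal
  rw [← FinitePlace.norm_lt_one_iff_mem (K := K)] at hmem
  simpa using hmem

theorem absNorm_asIdeal_ne_zero (v : HeightOneSpectrum (𝓞 K)) : Ideal.absNorm v.asIdeal ≠ 0 :=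
  Ideal.absNorm_eq_zero_iff.not.2 v.ne_bot

theorem valuation_sub_sum_div_factorial_le_one {v : HeightOneSpectrum (𝓞 K)} {x : ℕ → 𝓞 K} {γ : K}
    (hsum : ∑' n : ℕ, (n ! : v.adicCompletion K) * algebraMap K (v.adicCompletion K) (x n) =
      algebraMap K (v.adicCompletion K) γ) (N : ℕ) :
    v.valuation K ((γ - ∑ n ∈ range N, (n ! : K) * x n) / N !) ≤ 1 := by
  rw [← norm_algebraMap_adicCompletion_le_one_iff, map_div₀, map_sub, ← hsum, map_sum, norm_div]
  simp only [map_mul, map_natCast]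
  refine div_le_one_of_le₀ ?_ (norm_nonneg _)
  exact norm_tsum_factorial_mul_sub_sum_le (absNorm_asIdeal_ne_zero v)
    (norm_absNorm_adicCompletion_lt_one v)
    (fun n ↦ (norm_algebraMap_adicCompletion_le_one_iff v _).2 (v.valuation_le_one _)) N

theorem exists_eq_add_seqDeriv_of_tsum_factorial_mul_eq {x : ℕ → 𝓞 K} {γ : K}
    (hsum : ∀ v : HeightOneSpectrum (𝓞 K),
      ∑' n : ℕ, (n ! : v.adicCompletion K) * algebraMap K (v.adicCompletion K) (x n) =
        algebraMap K (v.adicCompletion K) γ) :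
    ∃ y : ℕ → 𝓞 K, y = x + seqDeriv (𝓞 K) y := by
  choose y hy using fun N : ℕ ↦
    HeightOneSpectrum.mem_integers_of_valuation_le_one K
      ((γ - ∑ n ∈ range N, (n ! : K) * x n) / N !)
      fun v ↦ valuation_sub_sum_div_factorial_le_one (hsum v) N
  refine ⟨y, funext fun n ↦ RingOfIntegers.coe_injective ?_⟩
  have hn : (n ! : K) ≠ 0 := mod_cast n.factorial_ne_zero
  have hn1 : (n + 1 : K) ≠ 0 := Nat.cast_add_one_ne_zero n
  simp only [Pi.add_apply, seqDeriv_apply, map_add, map_mul, map_natCast, map_one, hy,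
    sum_range_succ, Nat.factorial_succ]
  push_cast
  field_simp
  ring

end Places

theorem exists_common_denom_mul_eq {R F ι : Type*} [CommRing R] [Nontrivial R] [Field F]
    [Algebra R F] [IsFractionRing R F] [Finite ι] (a : ι → F) :
    ∃ d : R, d ≠ 0 ∧ ∃ b : ι → R, ∀ i, algebraMap R F (b i) = algebraMap R F d * a i := by
  obtain ⟨d, hd⟩ := IsLocalization.exist_integer_multiples_of_finite (nonZeroDivisors R) a
  choose b hb using hd
  exact ⟨d, nonZeroDivisors.ne_zero d.2, b, fun i ↦ (hb i).trans (Algebra.smul_def _ _)⟩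

/-- let `x_n = a₁α₁ⁿ + … + a_kα_kⁿ` be a linear recurrence sequence
in a number field `K`, with `α₁,…,α_k ∈ 𝓞 K` pairwise distinct and nonzero and
`a₁,…,a_k ∈ K` not all zero.  Then for any `a, b ∈ 𝓞 K`, `b ≠ 0`, there is a
non-Archimedean place `v'` of `K` with `∑_{n≥0} n!·x_n ≠ a/b` in `K_{v'}`. -/
theorem factorial_recurrence_sum_ne_ratio (K : Type*) [Field K] [NumberField K]
    {k : ℕ} (hk : 1 ≤ k)
    (α : Fin k → 𝓞 K) (hα0 : ∀ i, α i ≠ 0) (hinj : Function.Injective α)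
    (a : Fin k → K) (ha : ∃ i, a i ≠ 0)
    (x : ℕ → K) (hx : ∀ n, x n = ∑ i, a i * ((α i : K)) ^ n)
    (A B : 𝓞 K) (hB : B ≠ 0) :
    ∃ v' : HeightOneSpectrum (𝓞 K),
      (∑' n : ℕ, ((n ! : ℕ) : v'.adicCompletion K) *
          algebraMap K (v'.adicCompletion K) (x n)) ≠
        algebraMap K (v'.adicCompletion K) ((A : K) / (B : K)) := by
  by_contra! hcon
  obtain ⟨d, hd, b, hb⟩ := exists_common_denom_mul_eq (R := 𝓞 K) a
  have hbx (n : ℕ) : ((∑ i, b i * α i ^ n : 𝓞 K) : K) = d * x n := by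
    simp only [map_sum, map_mul, map_pow, hb, hx, mul_sum, mul_assoc]
  obtain ⟨y, hy⟩ : ∃ y, y = (fun n ↦ ∑ i, b i * α i ^ n) + seqDeriv (𝓞 K) y := by
    refine exists_eq_add_seqDeriv_of_tsum_factorial_mul_eq (γ := d * (A / B)) fun v ↦ ?_
    rw [map_mul, ← hcon v, ← tsum_mul_left]
    exact tsum_congr fun n ↦ by rw [hbx, map_mul, mul_left_comm]
  obtain ⟨i, hi⟩ := ha
  have hy0 : y = 0 :=
    eq_zero_of_eq_sum_mul_pow_add_seqDeriv ⟨i, mem_univ i⟩ hinj.injOn (fun j _ ↦ hα0 j) hy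
  have hb0 : b = 0 := Matrix.eq_zero_of_forall_pow_sum_mul_pow_eq_zero hinj fun n ↦ by
    simpa [hy0] using (congrFun hy n).symm
  have hda : (d : K) * a i = 0 := by simp [← hb, hb0]
  exact hi ((mul_eq_zero.1 hda).resolve_left (RingOfIntegers.coe_ne_zero_iff.2 hd))
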